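/- Let λ ∈ Λ_I⁺ and let β, γ ∈ Ψ_λ⁺ be such that sgn(s_βλ, s_γλ) ≠ 0. Then γ ∈ Φ_{β,1} and γ ∈ Φ_{β,2}. -/

import Mathlib

open scoped RealInnerProductSpace
open Classical

noncomputable section

namespace JantzenGVM

variable {V : Type*} [NormedAddCommGroup V] [InnerProductSpace ℝ V] [FiniteDimensional ℝ V]

/-- The coroot `α^∨ = 2α/⟨α,α⟩` of a vector `α` (junk value `0` when `α = 0`). -/
def coroot (α : V) : V := (2 / ⟪α, α⟫) • α

/-- The linear functional `v ↦ ⟨v, α^∨⟩`. -/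
def corootForm (α : V) : V →ₗ[ℝ] ℝ where
  toFun v := ⟪v, coroot α⟫
  map_add' x y := by simp [inner_add_left]
  map_smul' c x := by simp [inner_smul_left]

lemma corootForm_self {α : V} (h : ⟪α, α⟫ ≠ 0) : corootForm α α = 2 := by
  simp only [corootForm, coroot, LinearMap.coe_mk, AddHom.coe_mk, real_inner_smul_right]
  field_simp

/-- The reflection `s_α` as a linear automorphism of `V` (the identity when `⟨α,α⟩ = 0`). -/
def reflV (α : V) : V ≃ₗ[ℝ] V :=
  if h : ⟪α, α⟫ = 0 then LinearEquiv.refl ℝ V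
  else Module.reflection (corootForm_self h)

/-- `h* = ℂ ⊗ V`, realized as the space of real-linear functionals `V → ℂ` via the
inner product; an element `λ` pairs with a root `α` by `⟨λ, α⟩ = λ α` and with the
coroot by `⟨λ, α^∨⟩ = λ (coroot α)`. -/
abbrev HStar (V : Type*) [NormedAddCommGroup V] [InnerProductSpace ℝ V] := V →ₗ[ℝ] ℂ

/-- The canonical embedding of `V` into `h*`. -/
def emb (α : V) : HStar V where
  toFun v := (⟪α, v⟫ : ℂ)
  map_add' x y := by simp [inner_add_right]
  map_smul' c x := by simp [inner_smul_right, Complex.real_smul]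

/-- The action of a linear automorphism `w` of `V` on `h*`: `(w • λ)(v) = λ(w⁻¹ v)`. -/
def wAct (w : V ≃ₗ[ℝ] V) (l : HStar V) : HStar V := l ∘ₗ (w.symm : V →ₗ[ℝ] V)

/-- The reflection `s_β λ = λ - ⟨λ, β^∨⟩ β` acting on `h*`. -/
def sRefl (β : V) (l : HStar V) : HStar V := l - l (coroot β) • emb β

/-- The group generated by the reflections in the elements of `Φ'`. -/
def weyl (Φ' : Set V) : Subgroup (V ≃ₗ[ℝ] V) :=
  Subgroup.closure {w | ∃ α ∈ Φ', w = reflV α}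

/-- A finite, reduced, crystallographic root system spanning the Euclidean space `V`,
together with a choice of positive system and the corresponding simple system. -/
structure RootSys (V : Type*) [NormedAddCommGroup V] [InnerProductSpace ℝ V]
    [FiniteDimensional ℝ V] where
  Φ : Finset V
  pos : Finset V
  Δ : Finset V
  ne_zero : ∀ α ∈ Φ, α ≠ (0 : V)
  span_eq_top : Submodule.span ℝ (Φ : Set V) = ⊤
  reduced : ∀ α ∈ Φ, ∀ c : ℝ, c • α ∈ Φ → c = 1 ∨ c = -1
  refl_mem : ∀ α ∈ Φ, ∀ β ∈ Φ, reflV α β ∈ Φ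
  crystallographic : ∀ α ∈ Φ, ∀ β ∈ Φ, ∃ n : ℤ, ⟪β, coroot α⟫ = (n : ℝ)
  pos_subset : pos ⊆ Φ
  mem_pos_or : ∀ α ∈ Φ, α ∈ pos ∨ -α ∈ pos
  not_both : ∀ α ∈ pos, -α ∉ pos
  simple_subset : Δ ⊆ pos
  simple_indep : LinearIndependent ℝ (fun x : {a : V // a ∈ Δ} => x.1)
  simple_gen : ∀ β ∈ pos, ∃ c : V → ℝ, (∀ α ∈ Δ, 0 ≤ c α) ∧ β = ∑ α ∈ Δ, c α • α

/-- A subsystem of the root system: a subset of `Φ` closed under its own reflections. -/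
def IsSubsystem (S : RootSys V) (Φ' : Set V) : Prop :=
  Φ' ⊆ (S.Φ : Set V) ∧ ∀ α ∈ Φ', ∀ β ∈ Φ', reflV α β ∈ Φ'

/-- The length of `w`, i.e. the number of positive roots sent to negative roots
(this equals the Coxeter length for elements of the Weyl group). -/
def len (S : RootSys V) (w : V ≃ₗ[ℝ] V) : ℕ :=
  {β ∈ (S.pos : Set V) | w β ∉ (S.pos : Set V)}.ncard

/-- `Φ_I = ℤI ∩ Φ`, the subsystem generated by a subset `I` of the simple roots. -/
def PhiI (S : RootSys V) (I : Finset V) : Set V :=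
  {α ∈ (S.Φ : Set V) | α ∈ Submodule.span ℤ (I : Set V)}

/-- `z` is a positive integer. -/
def IsPosInt (z : ℂ) : Prop := ∃ n : ℤ, 0 < n ∧ z = (n : ℂ)

/-- `z` is an integer. -/
def IsInt (z : ℂ) : Prop := ∃ n : ℤ, z = (n : ℂ)

/-- `Λ_I⁺ = {λ ∈ h* : ⟨λ, α^∨⟩ ∈ ℤ_{>0} for all α ∈ I}`. -/
def LambdaP (I : Set V) : Set (HStar V) :=
  {l | ∀ α ∈ I, IsPosInt (l (coroot α))}

/-- `Λ⁺(Φ'', Φ') = {ν ∈ ℂΦ' : ⟨ν, α^∨⟩ ∈ ℤ_{>0} for all α ∈ Φ'' ∩ Φ⁺}`. -/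
def LambdaPSub (S : RootSys V) (Φ'' Φ' : Set V) : Set (HStar V) :=
  {l | l ∈ Submodule.span ℂ (emb '' Φ') ∧
       ∀ α ∈ Φ'' ∩ (S.pos : Set V), IsPosInt (l (coroot α))}

/-- `λ` is `Φ''`-regular: `⟨λ, α⟩ ≠ 0` for all `α ∈ Φ''`. -/
def IsRegularOn (Φ'' : Set V) (l : HStar V) : Prop := ∀ α ∈ Φ'', l α ≠ 0

/-- `Ψ⁺(λ, Φ'', Φ') = {β ∈ (Φ' ∩ Φ⁺) \ Φ'' : ⟨λ, β^∨⟩ ∈ ℤ_{>0}}`. -/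
def PsiP (S : RootSys V) (Φ'' Φ' : Set V) (l : HStar V) : Set V :=
  {β | β ∈ Φ' ∩ (S.pos : Set V) ∧ β ∉ Φ'' ∧ IsPosInt (l (coroot β))}

/-- `Ψ⁺⁺(λ, Φ'', Φ') = {β ∈ Ψ⁺(λ, Φ'', Φ') : s_β λ is Φ''-regular}`. -/
def PsiPP (S : RootSys V) (Φ'' Φ' : Set V) (l : HStar V) : Set V :=
  {β ∈ PsiP S Φ'' Φ' l | ∀ α ∈ Φ'', (sRefl β l) α ≠ 0}

/-- The sign function: `sgn(λ, μ) = (-1)^{ℓ(w)}` if `λ, μ` are `Φ''`-regular and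
`μ = wλ` for some `w ∈ W(Φ'')`, and `0` otherwise. -/
def sgnW (S : RootSys V) (Φ'' : Set V) (l m : HStar V) : ℤ :=
  if h : IsRegularOn Φ'' l ∧ IsRegularOn Φ'' m ∧ ∃ w, w ∈ weyl Φ'' ∧ m = wAct w l
  then (-1) ^ len S h.2.2.choose else 0

/-- The Jantzen coefficient `c(λ, μ, Φ'', Φ') = Σ_{β ∈ Ψ⁺⁺(λ,Φ'',Φ')} sgn(s_β λ, μ)`. -/
def jc (S : RootSys V) (Φ'' Φ' : Set V) (l m : HStar V) : ℤ :=
  ∑ᶠ β ∈ PsiPP S Φ'' Φ' l, sgnW S Φ'' (sRefl β l) m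

/-- The symmetrized Jantzen coefficient `c̃(λ, μ, Φ'', Φ')`. -/
def jcSym (S : RootSys V) (Φ'' Φ' : Set V) (l m : HStar V) : ℤ :=
  jc S Φ'' Φ' l m + jc S Φ'' Φ' m l

/-- `θ(λ) = Σ_{w ∈ W_I} (-1)^{ℓ(w)} e^{wλ}` in the free `ℤ`-module on `h*`. -/
def theta (S : RootSys V) (I : Finset V) (l : HStar V) : HStar V →₀ ℤ :=
  ∑ᶠ w ∈ (weyl (PhiI S I) : Set (V ≃ₗ[ℝ] V)),
    Finsupp.single (wAct w l) ((-1) ^ len S w)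

/-- `Φ_λ = {α ∈ Φ : ⟨λ, α⟩ = 0}`. -/
def singSet (S : RootSys V) (l : HStar V) : Set V :=
  {α ∈ (S.Φ : Set V) | l α = 0}

/-- `Φ_{[λ]} = {α ∈ Φ : ⟨λ, α^∨⟩ ∈ ℤ}`. -/
def integralSet (S : RootSys V) (l : HStar V) : Set V :=
  {α ∈ (S.Φ : Set V) | IsInt (l (coroot α))}

/-- `(ℚ A) ∩ Φ`, the intersection of the rational span of `A` with `Φ`.
Taking `A = Φ_I ∪ {β}` gives `Φ_{β,1}`; taking `A = Φ_λ ∪ {β}` gives `Φ_{β,2}`. -/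
def ratSpanRoots (S : RootSys V) (A : Set V) : Set V :=
  {γ ∈ (S.Φ : Set V) | ∃ (t : Finset V) (c : V → ℚ),
    (t : Set V) ⊆ A ∧ γ = ∑ α ∈ t, (c α : ℝ) • α}

/-- `Φ_{β,0}`, the irreducible component of `Φ` containing `β`. -/
def component (S : RootSys V) (β : V) : Set V :=
  {γ ∈ (S.Φ : Set V) |
    Relation.ReflTransGen
      (fun x y => x ∈ (S.Φ : Set V) ∧ y ∈ (S.Φ : Set V) ∧ ⟪x, y⟫ ≠ 0) β γ}

/-- `λ|_{Φ'}`: the unique element of `ℂΦ'` with `⟨λ|_{Φ'}, α^∨⟩ = ⟨λ, α^∨⟩`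
for all `α ∈ Φ'`. -/
def restrictW (Φ' : Set V) (l : HStar V) : HStar V :=
  letI : Nonempty (HStar V) := ⟨0⟩
  Classical.epsilon fun m =>
    m ∈ Submodule.span ℂ (emb '' Φ') ∧ ∀ α ∈ Φ', m (coroot α) = l (coroot α)

/-- `ᴵWᴶ = {w ∈ W : ℓ(uwv) = ℓ(u) + ℓ(w) + ℓ(v) for all u ∈ W_I, v ∈ W_J}`. -/
def doubleCoset (S : RootSys V) (I J : Finset V) : Set (V ≃ₗ[ℝ] V) :=
  {w | w ∈ weyl (S.Φ : Set V) ∧ ∀ u ∈ weyl (PhiI S I), ∀ v ∈ weyl (PhiI S J),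
    len S (u * w * v) = len S u + len S w + len S v}

/-- The fundamental weight `ϖ_j` relative to an enumeration `e` of the simple roots:
the unique element of `h*` with `⟨ϖ_j, α_k^∨⟩ = δ_{jk}`. -/
def fundWeight {n : ℕ} (e : Fin n → V) (j : Fin n) : HStar V :=
  letI : Nonempty (HStar V) := ⟨0⟩
  Classical.epsilon fun m => ∀ k : Fin n, m (coroot (e k)) = if k = j then 1 else 0

/-- The labels of the irreducible Dynkin types. -/
inductive LieType | A | B | C | D | E | F | G
deriving DecidableEq

/-- The Cartan matrix of type `A_n` (1-based indices): entry `(i,j)` is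
`⟨α_i, α_j^∨⟩`. -/
def cartanA (i j : ℕ) : ℤ :=
  if i = j then 2 else if i + 1 = j ∨ j + 1 = i then -1 else 0

/-- The Cartan matrices of the irreducible types in the standard (Bourbaki/Humphreys)
numbering of the Dynkin diagram: `cartanEntry t n i j = ⟨α_i, α_j^∨⟩` (1-based). -/
def cartanEntry : LieType → ℕ → ℕ → ℕ → ℤ
  | .A, _, i, j => cartanA i j
  | .B, n, i, j => if i + 1 = n ∧ j = n then -2 else cartanA i j
  | .C, n, i, j => if i = n ∧ j + 1 = n then -2 else cartanA i j
  | .D, n, i, j =>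
      if i = j then 2
      else if (i + 2 = n ∧ j = n) ∨ (i = n ∧ j + 2 = n) then -1
      else if (i + 1 = n ∧ j = n) ∨ (i = n ∧ j + 1 = n) then 0
      else cartanA i j
  | .E, _, i, j =>
      if i = j then 2
      else if (i = 1 ∧ j = 3) ∨ (i = 3 ∧ j = 1) ∨ (i = 2 ∧ j = 4) ∨ (i = 4 ∧ j = 2) then -1
      else if (i = 1 ∧ j = 2) ∨ (i = 2 ∧ j = 1) ∨ (i = 2 ∧ j = 3) ∨ (i = 3 ∧ j = 2) then 0
      else cartanA i j
  | .F, _, i, j => if i = 2 ∧ j = 3 then -2 else cartanA i j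
  | .G, _, i, j => if i = 2 ∧ j = 1 then -3 else cartanA i j

/-- The standard basis vector `e_k` (1-based index, junk `0` outside `1 ≤ k ≤ n`). -/
def stdE (n k : ℕ) : EuclideanSpace ℝ (Fin n) :=
  if h : 1 ≤ k ∧ k ≤ n then EuclideanSpace.single ⟨k - 1, by omega⟩ 1 else 0

/-- The labels `B`, `C`, `D` of the classical non-`A` types. -/
inductive BCD | B | C | D
deriving DecidableEq

/-- The root set of `B_n` / `C_n` / `D_n` in the standard realization. -/
def bcdRoots (t : BCD) (n : ℕ) : Set (EuclideanSpace ℝ (Fin n)) :=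
  {v | (∃ i j : ℕ, 1 ≤ i ∧ i < j ∧ j ≤ n ∧
          (v = stdE n i - stdE n j ∨ v = -(stdE n i - stdE n j) ∨
           v = stdE n i + stdE n j ∨ v = -(stdE n i + stdE n j))) ∨
       (match t with
        | .B => ∃ i : ℕ, 1 ≤ i ∧ i ≤ n ∧ (v = stdE n i ∨ v = -stdE n i)
        | .C => ∃ i : ℕ, 1 ≤ i ∧ i ≤ n ∧ (v = (2:ℝ) • stdE n i ∨ v = -((2:ℝ) • stdE n i))
        | .D => False)}

/-- The positive roots of `B_n` / `C_n` / `D_n` in the standard realization. -/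
def bcdPos (t : BCD) (n : ℕ) : Set (EuclideanSpace ℝ (Fin n)) :=
  {v | (∃ i j : ℕ, 1 ≤ i ∧ i < j ∧ j ≤ n ∧
          (v = stdE n i - stdE n j ∨ v = stdE n i + stdE n j)) ∨
       (match t with
        | .B => ∃ i : ℕ, 1 ≤ i ∧ i ≤ n ∧ v = stdE n i
        | .C => ∃ i : ℕ, 1 ≤ i ∧ i ≤ n ∧ v = (2:ℝ) • stdE n i
        | .D => False)}

/-- The simple roots of `B_n` / `C_n` / `D_n` in the standard realization. -/
def bcdSimple (t : BCD) (n : ℕ) : Set (EuclideanSpace ℝ (Fin n)) :=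
  {v | (∃ i : ℕ, 1 ≤ i ∧ i < n ∧ v = stdE n i - stdE n (i + 1)) ∨
       (match t with
        | .B => v = stdE n n
        | .C => v = (2:ℝ) • stdE n n
        | .D => v = stdE n (n - 1) + stdE n n)}

/-- The simple root `α_k` of `B_n` / `C_n` / `D_n` (1-based index `k`). -/
def bcdAlpha (t : BCD) (n k : ℕ) : EuclideanSpace ℝ (Fin n) :=
  if k < n then stdE n k - stdE n (k + 1)
  else match t with
  | .B => stdE n n
  | .C => (2:ℝ) • stdE n n
  | .D => stdE n (n - 1) + stdE n n

/-!
Pairing with `λ` turns `s_γ λ = w s_β λ`, `w ∈ W_I`, into the statement that `u = s_β w⁻¹ s_γ`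
fixes `λ`. By duality, a root lies in the rational span of a set of roots as soon as every vector
`x` orthogonal to that set is orthogonal to the root.

* If `x ⊥ Φ_I ∪ {β}`, then `w` and `s_β` fix `x`, so `⟨λ, s_γ x⟩ = ⟨λ, x⟩`, and `⟨λ, γ^∨⟩ ≠ 0`
  forces `x ⊥ γ`.
* If `x ⊥ Φ_λ ∪ {β}`, then `u` fixes `x`, because the stabilizer of `λ` in `W` is generated by the
  reflections in `Φ_λ`. Hence `w⁻¹ s_γ x = x`, so `s_γ x - x ∈ ℝγ ∩ ℝΦ_I`, which is zero
  because `γ ∉ Φ_I`.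

The theorem on stabilizers is reduced to real dominant functionals `φ`. Every `w ∈ W` is then a
product `c * d`, where `c` is generated by reflections fixing `φ` and `d` successively lowers `φ`;
dominance of `φ` leaves `d = 1` as the only possibility when `w` fixes `φ`.
-/

section LinearAlgebra

open Module

lemma mem_span_of_mem_span_of_mem_span_basis {K L M ι : Type*} [Field K] [Field L] [Algebra K L]
    [AddCommGroup M] [Module K M] [Module L M] [IsScalarTower K L M] (b : Basis ι L M)
    {A : Set M} (hA : A ⊆ Submodule.span K (Set.range b)) {x : M}
    (hxb : x ∈ Submodule.span K (Set.range b)) (hx : x ∈ Submodule.span L A) :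
    x ∈ Submodule.span K A := by
  -- Extend a `K`-linear functional separating `x` from `A` to an `L`-linear one.
  by_contra hxA
  obtain ⟨f, hfx, hfA⟩ := Submodule.exists_le_ker_of_notMem hxA
  let F : M →ₗ[L] L := b.constr L fun i => algebraMap K L (f (b i))
  have hF : ∀ y ∈ Submodule.span K (Set.range b), F y = algebraMap K L (f y) := by
    refine LinearMap.eqOn_span (f := F.restrictScalars K) (g := Algebra.linearMap K L ∘ₗ f) ?_
    rintro _ ⟨i, rfl⟩
    exact b.constr_basis L _ i
  have hFA : Submodule.span L A ≤ LinearMap.ker F := Submodule.span_le.mpr fun a ha => by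
    have hfa : f a = 0 := hfA (Submodule.subset_span ha)
    rw [SetLike.mem_coe, LinearMap.mem_ker, hF a (hA ha), hfa, map_zero]
  have hFx : F x = 0 := hFA hx
  exact hfx ((map_eq_zero (algebraMap K L)).mp (hF x hxb ▸ hFx))

lemma mem_span_image_of_mem_span_range {R L M ι : Type*} [CommRing R] [CommRing L] [Nontrivial L]
    [IsDomain R] [Algebra R L] [IsTorsionFree R L] [AddCommGroup M] [Module R M] [Module L M]
    [IsScalarTower R L M] (b : Basis ι L M) {s : Set ι} {x : M}
    (hxb : x ∈ Submodule.span R (Set.range b)) (hx : x ∈ Submodule.span L (b '' s)) :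
    x ∈ Submodule.span R (b '' s) := by
  rw [← b.linearCombination_repr x, Finsupp.linearCombination_apply]
  refine Submodule.sum_mem _ fun i hi => ?_
  obtain ⟨r, hr⟩ := (b.mem_span_iff_repr_mem R x).mp hxb i
  simp only [← hr, algebraMap_smul]
  exact Submodule.smul_mem _ r
    (Submodule.subset_span (Set.mem_image_of_mem b (b.mem_span_image.mp hx hi)))

end LinearAlgebra

section Reflections

omit [FiniteDimensional ℝ V] in
lemma inner_coroot (α v : V) : ⟪v, coroot α⟫ = 2 / ⟪α, α⟫ * ⟪v, α⟫ := by
  rw [coroot, real_inner_smul_right]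

omit [FiniteDimensional ℝ V] in
lemma inner_coroot_eq_zero_iff {α v : V} : ⟪v, coroot α⟫ = 0 ↔ ⟪v, α⟫ = 0 := by
  rcases eq_or_ne α 0 with rfl | hα
  · simp [inner_coroot]
  · simp [inner_coroot, hα]

omit [FiniteDimensional ℝ V] in
lemma inner_coroot_pos {α v : V} (h : 0 < ⟪v, α⟫) : 0 < ⟪v, coroot α⟫ := by
  have hα : α ≠ 0 := by rintro rfl; simp at h
  have hαα : 0 < ⟪α, α⟫ := real_inner_self_pos.mpr hα
  rw [inner_coroot]
  positivity

lemma reflV_apply (α v : V) : reflV α v = v - ⟪v, coroot α⟫ • α := by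
  unfold reflV
  split_ifs with h
  · simp [inner_self_eq_zero.mp h]
  · exact Module.reflection_apply _ _

lemma reflV_eq_reflection (α : V) :
    reflV α = (Submodule.reflection (ℝ ∙ α)ᗮ).toLinearEquiv := by
  ext v
  rw [reflV_apply, inner_coroot, real_inner_self_eq_norm_sq, LinearIsometryEquiv.coe_toLinearEquiv,
    Submodule.reflection_orthogonal_apply, Submodule.reflection_singleton_apply,
    real_inner_comm]
  simp only [RCLike.ofReal_real_eq_id, id_eq]
  module

lemma reflV_self (α : V) : reflV α α = -α := by
  rw [reflV_eq_reflection]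
  exact Submodule.reflection_orthogonalComplement_singleton_eq_neg α

lemma reflV_reflV (α v : V) : reflV α (reflV α v) = v := by
  rw [reflV_eq_reflection]
  exact Submodule.reflection_reflection _ v

lemma reflV_mul_self (α : V) : reflV α * reflV α = 1 :=
  LinearEquiv.ext (reflV_reflV α)

lemma reflV_inv (α : V) : (reflV α)⁻¹ = reflV α :=
  inv_eq_of_mul_eq_one_left (reflV_mul_self α)

lemma reflV_eq_self_of_inner_eq_zero {α v : V} (h : ⟪v, α⟫ = 0) : reflV α v = v := by
  rw [reflV_apply, inner_coroot_eq_zero_iff.mpr h, zero_smul, sub_zero]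

lemma inner_reflV_reflV (α v w : V) : ⟪reflV α v, reflV α w⟫ = ⟪v, w⟫ := by
  rw [reflV_eq_reflection]
  exact LinearIsometryEquiv.inner_map_map _ v w

lemma conj_reflV {w : V ≃ₗ[ℝ] V} (hw : ∀ x y, ⟪w x, w y⟫ = ⟪x, y⟫) (α : V) :
    w * reflV α * w⁻¹ = reflV (w α) := by
  rw [mul_inv_eq_iff_eq_mul]
  ext v
  simp only [LinearEquiv.mul_apply, reflV_apply, map_sub, map_smul, inner_coroot, hw]

lemma reflV_mul_reflV (α δ : V) : reflV α * reflV δ = reflV δ * reflV (reflV δ α) := by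
  rw [← conj_reflV (inner_reflV_reflV δ), reflV_inv, mul_assoc, ← mul_assoc, reflV_mul_self,
    one_mul]

lemma sRefl_apply (β : V) (l : HStar V) (v : V) : sRefl β l v = l (reflV β v) := by
  rw [reflV_apply, map_sub, map_smul]
  simp only [sRefl, emb, LinearMap.sub_apply, LinearMap.smul_apply, LinearMap.coe_mk,
    AddHom.coe_mk, coroot, map_smul, real_inner_smul_right, smul_eq_mul, Complex.real_smul,
    real_inner_comm β v]
  push_cast
  ring

end Reflections

section Weyl

variable {A : Set V} {w : V ≃ₗ[ℝ] V}

lemma reflV_mem_weyl {α : V} (hα : α ∈ A) : reflV α ∈ weyl A :=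
  Subgroup.subset_closure ⟨α, hα, rfl⟩

lemma weyl_le_iff {G : Subgroup (V ≃ₗ[ℝ] V)} : weyl A ≤ G ↔ ∀ α ∈ A, reflV α ∈ G := by
  rw [weyl, Subgroup.closure_le]
  exact ⟨fun h α hα => h ⟨α, hα, rfl⟩, by rintro h _ ⟨α, hα, rfl⟩; exact h α hα⟩

lemma weyl_mono {B : Set V} (h : A ⊆ B) : weyl A ≤ weyl B :=
  weyl_le_iff.mpr fun _ hα => reflV_mem_weyl (h hα)

@[elab_as_elim]
lemma weyl_induction {p : ∀ w : V ≃ₗ[ℝ] V, w ∈ weyl A → Prop} (one : p 1 (one_mem _))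
    (mul_reflV : ∀ (w) (hw : w ∈ weyl A) (α) (hα : α ∈ A), p w hw →
      p (w * reflV α) (mul_mem hw (reflV_mem_weyl hα)))
    (hw : w ∈ weyl A) : p w hw := by
  induction hw using Subgroup.closure_induction_right with
  | one => exact one
  | mul_right w hw _ hα ih =>
    obtain ⟨α, hα, rfl⟩ := hα
    exact mul_reflV w hw α hα ih
  | mul_inv_cancel w hw _ hα ih =>
    obtain ⟨α, hα, rfl⟩ := hα
    simpa only [reflV_inv] using mul_reflV w hw α hα ih

lemma inner_weyl_apply (hw : w ∈ weyl A) (x y : V) : ⟪w x, w y⟫ = ⟪x, y⟫ := by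
  induction hw using weyl_induction generalizing x y with
  | one => rfl
  | mul_reflV w _ α _ ih => rw [LinearEquiv.mul_apply, LinearEquiv.mul_apply, ih, inner_reflV_reflV]

lemma weyl_apply_eq_self (hw : w ∈ weyl A) {x : V} (hx : ∀ α ∈ A, ⟪x, α⟫ = 0) : w x = x := by
  induction hw using weyl_induction with
  | one => rfl
  | mul_reflV w _ α hα ih =>
    rw [LinearEquiv.mul_apply, reflV_eq_self_of_inner_eq_zero (hx α hα), ih]

lemma weyl_apply_sub_mem_span (hw : w ∈ weyl A) (x : V) : w x - x ∈ Submodule.span ℝ A := by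
  induction hw using weyl_induction generalizing x with
  | one => simp
  | mul_reflV w _ α hα ih =>
    have hrefl : reflV α x - x ∈ Submodule.span ℝ A := by
      rw [reflV_apply, sub_sub_cancel_left]
      exact neg_mem (Submodule.smul_mem _ _ (Submodule.subset_span hα))
    simpa using add_mem (ih (reflV α x)) hrefl

lemma map_weyl_apply {M : Type*} [AddCommGroup M] [Module ℝ M] {f : V →ₗ[ℝ] M}
    (hf : ∀ α ∈ A, f α = 0) (hw : w ∈ weyl A) (v : V) : f (w v) = f v := by
  have hker : Submodule.span ℝ A ≤ LinearMap.ker f := Submodule.span_le.mpr hf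
  exact sub_eq_zero.mp (map_sub f _ _ ▸ hker (weyl_apply_sub_mem_span hw v))

lemma conj_mem_weyl_image {g : V ≃ₗ[ℝ] V} (hg : ∀ x y, ⟪g x, g y⟫ = ⟪x, y⟫) (hw : w ∈ weyl A) :
    g * w * g⁻¹ ∈ weyl (g '' A) := by
  induction hw using weyl_induction with
  | one => simp
  | mul_reflV w _ α hα ih =>
    have hα' : g * reflV α * g⁻¹ ∈ weyl (g '' A) := by
      rw [conj_reflV hg]
      exact reflV_mem_weyl (Set.mem_image_of_mem g hα)
    convert mul_mem ih hα' using 1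
    group

end Weyl

namespace RootSys

variable (S : RootSys V)

section SimpleRoots

variable {S} {β γ δ : V}

lemma mem_of_mem_simple (hδ : δ ∈ S.Δ) : δ ∈ S.Φ :=
  S.pos_subset (S.simple_subset hδ)

variable (S) in
lemma span_simple : Submodule.span ℝ (S.Δ : Set V) = ⊤ := by
  have hpos : ∀ β ∈ S.pos, β ∈ Submodule.span ℝ (S.Δ : Set V) := by
    intro β hβ
    obtain ⟨c, -, rfl⟩ := S.simple_gen β hβ
    exact Submodule.sum_mem _ fun δ hδ => Submodule.smul_mem _ _ (Submodule.subset_span hδ)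
  rw [eq_top_iff, ← S.span_eq_top, Submodule.span_le]
  intro β hβ
  rcases S.mem_pos_or β hβ with h | h
  · exact hpos β h
  · exact neg_mem_iff.mp (hpos _ h)

variable (S) in
/-- The simple roots as a basis of `V`, used to read off the coefficients of a root. -/
def simpleBasis : Module.Basis {δ // δ ∈ S.Δ} ℝ V :=
  Module.Basis.mk S.simple_indep (by simp [S.span_simple])

@[simp]
lemma simpleBasis_apply (i : {δ // δ ∈ S.Δ}) : S.simpleBasis i = i :=
  Module.Basis.mk_apply _ _ i

lemma range_simpleBasis : Set.range S.simpleBasis = (S.Δ : Set V) := by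
  simp [simpleBasis]

lemma simpleBasis_repr_nonneg (hβ : β ∈ S.pos) (i : {δ // δ ∈ S.Δ}) :
    0 ≤ S.simpleBasis.repr β i := by
  obtain ⟨c, hc, rfl⟩ := S.simple_gen β hβ
  have hsum : ∑ δ ∈ S.Δ, c δ • δ = ∑ j : {δ // δ ∈ S.Δ}, c j • S.simpleBasis j := by
    simp only [simpleBasis_apply]
    exact (Finset.sum_coe_sort S.Δ fun δ => c δ • δ).symm
  rw [hsum, S.simpleBasis.repr_sum_self fun j => c j]
  exact hc i i.2

lemma map_nonneg_of_mem_pos {φ : Module.Dual ℝ V} (hφ : ∀ δ ∈ S.Δ, 0 ≤ φ δ) (hβ : β ∈ S.pos) :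
    0 ≤ φ β := by
  obtain ⟨c, hc, rfl⟩ := S.simple_gen β hβ
  rw [map_sum]
  exact Finset.sum_nonneg fun δ hδ => by
    rw [map_smul]
    exact mul_nonneg (hc δ hδ) (hφ δ hδ)

lemma reflV_mem_pos (hβ : β ∈ S.pos) (hδ : δ ∈ S.Δ) (hne : β ≠ δ) : reflV δ β ∈ S.pos := by
  -- Otherwise all coordinates of `β` other than the one at `δ` vanish.
  by_contra hn
  have hneg : -reflV δ β ∈ S.pos :=
    (S.mem_pos_or _ (S.refl_mem δ (mem_of_mem_simple hδ) β (S.pos_subset hβ))).resolve_left hn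
  let d : {δ // δ ∈ S.Δ} := ⟨δ, hδ⟩
  have hδrepr : S.simpleBasis.repr δ = Finsupp.single d 1 := by
    rw [← S.simpleBasis.repr_self, simpleBasis_apply]
  have hcoord : ∀ i, i ≠ d → S.simpleBasis.repr β i = 0 := by
    intro i hi
    refine le_antisymm ?_ (simpleBasis_repr_nonneg hβ i)
    simpa [reflV_apply, hδrepr, Finsupp.single_eq_of_ne hi] using simpleBasis_repr_nonneg hneg i
  have hβ_eq : S.simpleBasis.repr β d • δ = β := by
    conv_rhs => rw [← S.simpleBasis.sum_repr β]
    rw [Finset.sum_eq_single d (fun i _ hi => by rw [hcoord i hi, zero_smul]) (by simp),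
      simpleBasis_apply]
  rcases S.reduced δ (mem_of_mem_simple hδ) _ (hβ_eq.symm ▸ S.pos_subset hβ) with h | h
  · exact hne (by rw [← hβ_eq, h, one_smul])
  · linarith [simpleBasis_repr_nonneg hβ d]

lemma exists_simple_inner_pos (hβ : β ∈ S.pos) : ∃ δ ∈ S.Δ, 0 < ⟪β, δ⟫ := by
  by_contra! hle
  have hββ : 0 ≤ -⟪β, β⟫ := by
    simpa using map_nonneg_of_mem_pos (φ := -innerₗ V β) (by simpa using hle) hβ
  exact S.ne_zero β (S.pos_subset hβ) (real_inner_self_nonpos.mp (by linarith))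

variable (S) in
lemma exists_forall_simple_inner_pos : ∃ ρ : V, ∀ δ ∈ S.Δ, 0 < ⟪ρ, δ⟫ := by
  let height : Module.Dual ℝ V := S.simpleBasis.constr ℝ fun _ => (1 : ℝ)
  refine ⟨(InnerProductSpace.toDual ℝ V).symm height.toContinuousLinearMap, fun δ hδ => ?_⟩
  have hδ1 : height δ = 1 := by
    simpa only [simpleBasis_apply] using S.simpleBasis.constr_basis ℝ (fun _ => (1 : ℝ)) ⟨δ, hδ⟩
  rw [InnerProductSpace.toDual_symm_apply, LinearMap.coe_toContinuousLinearMap', hδ1]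
  exact one_pos

@[elab_as_elim]
lemma pos_induction {p : V → Prop} (simple : ∀ δ ∈ S.Δ, p δ)
    (step : ∀ δ ∈ S.Δ, ∀ β ∈ S.pos, p β → p (reflV δ β)) (hβ : β ∈ S.pos) : p β := by
  obtain ⟨ρ, hρ⟩ := S.exists_forall_simple_inner_pos
  by_contra hpβ
  obtain ⟨α, hα, hmin⟩ := Finset.exists_min_image (S.pos.filter fun α => ¬p α) (fun α => ⟪ρ, α⟫)
    ⟨β, Finset.mem_filter.mpr ⟨hβ, hpβ⟩⟩
  obtain ⟨hα, hpα⟩ := Finset.mem_filter.mp hα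
  obtain ⟨δ, hδ, hαδ⟩ := exists_simple_inner_pos hα
  have hα' := reflV_mem_pos hα hδ (by rintro rfl; exact hpα (simple _ hδ))
  have hpα' : ¬p (reflV δ α) := fun h => hpα (by simpa only [reflV_reflV] using step δ hδ _ hα' h)
  have hle := hmin _ (Finset.mem_filter.mpr ⟨hα', hpα'⟩)
  rw [reflV_apply, inner_sub_right, real_inner_smul_right] at hle
  linarith [mul_pos (inner_coroot_pos hαδ) (hρ δ hδ)]

@[elab_as_elim]
lemma root_induction {p : V → Prop} (simple : ∀ δ ∈ S.Δ, p δ)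
    (step : ∀ δ ∈ S.Δ, ∀ β ∈ S.Φ, p β → p (reflV δ β)) (hβ : β ∈ S.Φ) : p β := by
  have hneg : ∀ α ∈ S.Φ, -α ∈ S.Φ := fun α hα => reflV_self α ▸ S.refl_mem α hα α hα
  have hpos : ∀ α ∈ S.pos, p α ∧ p (-α) := by
    refine fun α hα => pos_induction (p := fun α => p α ∧ p (-α)) (fun δ hδ => ?_)
      (fun δ hδ α hα ih => ?_) hα
    · exact ⟨simple δ hδ, reflV_self δ ▸ step δ hδ δ (mem_of_mem_simple hδ) (simple δ hδ)⟩
    · have hα := S.pos_subset hα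
      exact ⟨step δ hδ α hα ih.1, map_neg (reflV δ) α ▸ step δ hδ _ (hneg α hα) ih.2⟩
  rcases S.mem_pos_or β hβ with h | h
  · exact (hpos β h).1
  · exact neg_neg β ▸ (hpos _ h).2

lemma mem_span_int_simple (hβ : β ∈ S.Φ) : β ∈ Submodule.span ℤ (S.Δ : Set V) := by
  refine root_induction (fun δ hδ => Submodule.subset_span hδ) (fun δ hδ β hβ ih => ?_) hβ
  obtain ⟨n, hn⟩ := S.crystallographic δ (mem_of_mem_simple hδ) β hβ
  rw [reflV_apply, hn, Int.cast_smul_eq_zsmul]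
  exact sub_mem ih (Submodule.smul_mem _ n (Submodule.subset_span hδ))

lemma mem_PhiI_of_mem_span {I : Finset V} (hI : I ⊆ S.Δ) (hγ : γ ∈ S.Φ)
    (h : γ ∈ Submodule.span ℝ (PhiI S I)) : γ ∈ PhiI S I := by
  have himage : S.simpleBasis '' {i | i.1 ∈ I} = (I : Set V) := by
    ext x
    simpa using @hI x
  have hspan : Submodule.span ℝ (PhiI S I) ≤ Submodule.span ℝ (I : Set V) :=
    Submodule.span_le.mpr fun x hx => Submodule.span_le_restrictScalars ℤ ℝ _ hx.2
  refine ⟨hγ, himage ▸ mem_span_image_of_mem_span_range S.simpleBasis ?_ ?_⟩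
  · exact range_simpleBasis (S := S) ▸ mem_span_int_simple hγ
  · exact himage.symm ▸ hspan h

lemma mem_ratSpanRoots_of_mem_span {A : Set V} (hA : A ⊆ S.Φ) (hγ : γ ∈ S.Φ)
    (h : γ ∈ Submodule.span ℝ A) : γ ∈ ratSpanRoots S A := by
  let _ : Module ℚ V := Module.compHom V (algebraMap ℚ ℝ)
  have : IsScalarTower ℚ ℝ V := IsScalarTower.of_compHom ℚ ℝ V
  have hrat : ∀ α ∈ S.Φ, α ∈ Submodule.span ℚ (Set.range S.simpleBasis) := fun α hα =>
    Submodule.span_le_restrictScalars ℤ ℚ _ (range_simpleBasis (S := S) ▸ mem_span_int_simple hα)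
  obtain ⟨c, t, htA, -, hc⟩ := Submodule.mem_span_iff_exists_finset_subset.mp
    (mem_span_of_mem_span_of_mem_span_basis S.simpleBasis (fun α hα => hrat α (hA hα))
      (hrat γ hγ) h)
  exact ⟨hγ, t, c, htA, hc.symm⟩

lemma mem_ratSpanRoots_of_forall_inner {A : Set V} (hA : A ⊆ S.Φ) (hγ : γ ∈ S.Φ)
    (h : ∀ x, (∀ α ∈ A, ⟪x, α⟫ = 0) → ⟪x, γ⟫ = 0) : γ ∈ ratSpanRoots S A := by
  refine mem_ratSpanRoots_of_mem_span hA hγ ?_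
  rw [← Submodule.orthogonal_orthogonal (Submodule.span ℝ A), Submodule.mem_orthogonal]
  exact fun x hx => h x fun α hα =>
    Submodule.inner_left_of_mem_orthogonal (Submodule.subset_span hα) hx

end SimpleRoots

section WeylGroup

variable {S} {w : V ≃ₗ[ℝ] V}

lemma weyl_apply_mem (hw : w ∈ weyl (S.Φ : Set V)) {α : V} (hα : α ∈ S.Φ) : w α ∈ S.Φ := by
  induction hw using weyl_induction generalizing α with
  | one => exact hα
  | mul_reflV _ _ β hβ ih => exact ih (S.refl_mem β hβ α hα)

variable (S) in
lemma weyl_simple : weyl (S.Δ : Set V) = weyl (S.Φ : Set V) := by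
  refine le_antisymm (weyl_mono fun _ => mem_of_mem_simple) (weyl_le_iff.mpr fun β hβ => ?_)
  refine root_induction (fun δ hδ => reflV_mem_weyl hδ) (fun δ hδ β _ ih => ?_) hβ
  rw [← conj_reflV (inner_reflV_reflV δ)]
  exact mul_mem (mul_mem (reflV_mem_weyl hδ) ih) (inv_mem (reflV_mem_weyl hδ))

instance finite_weyl : Finite (weyl (S.Φ : Set V)) := by
  refine Finite.of_injective (β := S.Φ → S.Φ)
    (fun w α => ⟨w.1 α, weyl_apply_mem w.2 α.2⟩) fun _ _ h => ?_
  refine Subtype.ext (LinearEquiv.toLinearMap_injective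
    (LinearMap.ext_on S.span_eq_top fun α hα => ?_))
  exact congrArg Subtype.val (congrFun h ⟨α, hα⟩)

variable (S) in
lemma exists_dominant (φ : Module.Dual ℝ V) :
    ∃ g ∈ weyl (S.Φ : Set V), ∀ δ ∈ S.Δ, 0 ≤ φ (g δ) := by
  obtain ⟨ρ, hρ⟩ := S.exists_forall_simple_inner_pos
  obtain ⟨⟨g, hg⟩, hmax⟩ := Finite.exists_max fun g : weyl (S.Φ : Set V) => φ (g.1 ρ)
  refine ⟨g, hg, fun δ hδ => ?_⟩
  have hle := hmax ⟨g * reflV δ, mul_mem hg (reflV_mem_weyl (mem_of_mem_simple hδ))⟩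
  simp only [LinearEquiv.mul_apply, reflV_apply, map_sub, map_smul, smul_eq_mul] at hle
  exact nonneg_of_mul_nonneg_right (by linarith) (inner_coroot_pos (hρ δ hδ))

end WeylGroup

section Stabilizer

variable {φ : Module.Dual ℝ V} {d w : V ≃ₗ[ℝ] V}

/-- `S.IsDescending φ w` means that `φ ∘ w` is obtained from `φ` by a chain of reflections, each of
which replaces a functional `ψ` by `ψ ∘ s_α` for a positive root `α` with `0 < ψ α` and thus lowers
`ψ` in the Bruhat order on the orbit of `φ`. -/
inductive IsDescending (φ : Module.Dual ℝ V) : (V ≃ₗ[ℝ] V) → Prop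
  | one : IsDescending φ 1
  | mul_reflV {w : V ≃ₗ[ℝ] V} {α : V} : IsDescending φ w → α ∈ S.pos → 0 < φ (w α) →
      IsDescending φ (w * reflV α)

variable {S}

lemma IsDescending.exists_mul_reflV_eq (hφ : ∀ δ ∈ S.Δ, 0 ≤ φ δ) (hd : S.IsDescending φ d)
    {δ : V} (hδ : δ ∈ S.Δ) :
    ∃ c ∈ weyl {α ∈ (S.Φ : Set V) | φ α = 0}, ∃ e, S.IsDescending φ e ∧
      d * reflV δ = c * e := by
  induction hd with
  | one =>
    rcases (hφ δ hδ).eq_or_lt with h | h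
    · exact ⟨reflV δ, reflV_mem_weyl ⟨mem_of_mem_simple hδ, h.symm⟩, 1, .one, by
        rw [one_mul, mul_one]⟩
    · exact ⟨1, one_mem _, 1 * reflV δ, .mul_reflV .one (S.simple_subset hδ) h,
        (one_mul _).symm⟩
  | @mul_reflV d α hd hα hdα ih =>
    by_cases hαδ : α = δ
    · exact ⟨1, one_mem _, d, hd, by rw [hαδ, mul_assoc, reflV_mul_self, mul_one, one_mul]⟩
    obtain ⟨c, hc, e, he, hde⟩ := ih
    have hpos : 0 < φ (e (reflV δ α)) := calc
      0 < φ (d α) := hdα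
      _ = φ ((d * reflV δ) (reflV δ α)) := by rw [LinearEquiv.mul_apply, reflV_reflV]
      _ = φ (e (reflV δ α)) := by
        rw [hde, LinearEquiv.mul_apply, map_weyl_apply (fun _ h => h.2) hc]
    refine ⟨c, hc, e * reflV (reflV δ α), he.mul_reflV (reflV_mem_pos hα hδ hαδ) hpos, ?_⟩
    rw [mul_assoc, reflV_mul_reflV, ← mul_assoc, hde, mul_assoc]

lemma exists_eq_mul_isDescending (hφ : ∀ δ ∈ S.Δ, 0 ≤ φ δ) (hw : w ∈ weyl (S.Φ : Set V)) :
    ∃ c ∈ weyl {α ∈ (S.Φ : Set V) | φ α = 0}, ∃ d, S.IsDescending φ d ∧ w = c * d := by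
  rw [← S.weyl_simple] at hw
  induction hw using weyl_induction with
  | one => exact ⟨1, one_mem _, 1, .one, (mul_one 1).symm⟩
  | mul_reflV w _ δ hδ ih =>
    obtain ⟨c, hc, d, hd, rfl⟩ := ih
    obtain ⟨c', hc', d', hd', h⟩ := hd.exists_mul_reflV_eq hφ hδ
    exact ⟨c * c', mul_mem hc hc', d', hd', by rw [mul_assoc, h, mul_assoc]⟩

lemma IsDescending.eq_one (hφ : ∀ δ ∈ S.Δ, 0 ≤ φ δ) (hd : S.IsDescending φ d)
    (hfix : ∀ v, φ (d v) = φ v) : d = 1 := by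
  cases hd with
  | one => rfl
  | @mul_reflV d α _ hα hdα =>
    have hα' := hfix α
    rw [LinearEquiv.mul_apply, reflV_self, map_neg, map_neg] at hα'
    linarith [map_nonneg_of_mem_pos hφ hα]

lemma mem_weyl_zeros_of_dominant (hφ : ∀ δ ∈ S.Δ, 0 ≤ φ δ) (hw : w ∈ weyl (S.Φ : Set V))
    (hfix : ∀ v, φ (w v) = φ v) : w ∈ weyl {α ∈ (S.Φ : Set V) | φ α = 0} := by
  obtain ⟨c, hc, d, hd, rfl⟩ := exists_eq_mul_isDescending hφ hw
  have hd1 : d = 1 := hd.eq_one hφ fun v => by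
    rw [← hfix v, LinearEquiv.mul_apply, map_weyl_apply (fun _ h => h.2) hc]
  rwa [hd1, mul_one]

lemma mem_weyl_zeros_of_forall_apply_eq (hw : w ∈ weyl (S.Φ : Set V))
    (hfix : ∀ v, φ (w v) = φ v) : w ∈ weyl {α ∈ (S.Φ : Set V) | φ α = 0} := by
  obtain ⟨g, hg, hdom⟩ := S.exists_dominant φ
  have hconj : g⁻¹ * w * g ∈ weyl {α ∈ (S.Φ : Set V) | φ (g α) = 0} :=
    mem_weyl_zeros_of_dominant (φ := φ ∘ₗ (g : V →ₗ[ℝ] V)) hdom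
      (mul_mem (mul_mem (inv_mem hg) hw) hg) fun v => by
        simpa [LinearEquiv.mul_apply] using hfix (g v)
  have himage : g '' {α ∈ (S.Φ : Set V) | φ (g α) = 0} ⊆ {α ∈ (S.Φ : Set V) | φ α = 0} := by
    rintro _ ⟨α, ⟨hα, hφα⟩, rfl⟩
    exact ⟨weyl_apply_mem hg hα, hφα⟩
  convert weyl_mono himage (conj_mem_weyl_image (inner_weyl_apply hg) hconj) using 1
  group

lemma mem_weyl_singSet_of_forall_apply_eq {l : HStar V} (hw : w ∈ weyl (S.Φ : Set V))
    (hfix : ∀ v, l (w v) = l v) : w ∈ weyl (singSet S l) := by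
  obtain ⟨f, hf⟩ := Module.exists_dual_forall_apply_ne_zero (K := ℝ)
    (fun α : {α // α ∈ S.Φ.filter fun α => l α ≠ 0} => l α)
    fun α => (Finset.mem_filter.mp α.2).2
  refine weyl_mono ?_ (mem_weyl_zeros_of_forall_apply_eq (φ := f ∘ₗ l) hw fun v => ?_)
  · rintro α ⟨hα, hfα⟩
    exact ⟨hα, by_contra fun hlα => hf ⟨α, Finset.mem_filter.mpr ⟨hα, hlα⟩⟩ hfα⟩
  · rw [LinearMap.comp_apply, hfix, LinearMap.comp_apply]

end Stabilizer

end RootSys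

section Jantzen

variable {S : RootSys V} {Φ' : Set V} {l : HStar V} {β γ : V} {w : V ≃ₗ[ℝ] V}

lemma IsPosInt.ne_zero {z : ℂ} (h : IsPosInt z) : z ≠ 0 := by
  obtain ⟨n, hn, rfl⟩ := h
  exact Int.cast_ne_zero.mpr hn.ne'

lemma exists_wAct_eq_of_sgnW_ne_zero {l m : HStar V} (h : sgnW S Φ' l m ≠ 0) :
    ∃ w ∈ weyl Φ', m = wAct w l := by
  unfold sgnW at h
  split_ifs at h with hlm
  · exact hlm.2.2
  · exact absurd rfl h

lemma apply_reflV_of_sRefl_eq (h : sRefl γ l = wAct w (sRefl β l)) (v : V) :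
    l (reflV γ v) = l (reflV β (w⁻¹ v)) := by
  rw [← sRefl_apply, h, ← sRefl_apply]
  rfl

theorem mem_ratSpanRoots_union_of_sRefl_eq (hΦ' : Φ' ⊆ S.Φ) (hβ : β ∈ S.Φ) (hγ : γ ∈ S.Φ)
    (hlγ : l (coroot γ) ≠ 0) (hw : w ∈ weyl Φ') (h : sRefl γ l = wAct w (sRefl β l)) :
    γ ∈ ratSpanRoots S (Φ' ∪ {β}) := by
  refine RootSys.mem_ratSpanRoots_of_forall_inner
    (Set.union_subset hΦ' (Set.singleton_subset_iff.mpr hβ)) hγ fun x hx => ?_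
  have hwx : w⁻¹ x = x := weyl_apply_eq_self (inv_mem hw) fun α hα => hx α (.inl hα)
  have hlx : l (reflV γ x) = l x := by
    rw [apply_reflV_of_sRefl_eq h, hwx, reflV_eq_self_of_inner_eq_zero (hx β (.inr rfl))]
  rw [reflV_apply, map_sub, sub_eq_self, map_smul, smul_eq_zero] at hlx
  have hlγ' : l γ ≠ 0 := fun h0 => hlγ (by rw [coroot, map_smul, h0, smul_zero])
  exact inner_coroot_eq_zero_iff.mp (hlx.resolve_right hlγ')

theorem mem_ratSpanRoots_singSet_union_of_sRefl_eq (hΦ' : Φ' ⊆ S.Φ) (hβ : β ∈ S.Φ)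
    (hγ : γ ∈ S.Φ) (hγΦ' : γ ∉ Submodule.span ℝ Φ') (hw : w ∈ weyl Φ')
    (h : sRefl γ l = wAct w (sRefl β l)) : γ ∈ ratSpanRoots S (singSet S l ∪ {β}) := by
  refine RootSys.mem_ratSpanRoots_of_forall_inner
    (Set.union_subset (fun _ hα => hα.1) (Set.singleton_subset_iff.mpr hβ)) hγ fun x hx => ?_
  have hu : reflV β * w⁻¹ * reflV γ ∈ weyl (singSet S l) := by
    refine RootSys.mem_weyl_singSet_of_forall_apply_eq ?_ fun v => ?_
    · exact mul_mem (mul_mem (reflV_mem_weyl hβ) (inv_mem (weyl_mono hΦ' hw))) (reflV_mem_weyl hγ)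
    · rw [LinearEquiv.mul_apply, LinearEquiv.mul_apply, ← apply_reflV_of_sRefl_eq h, reflV_reflV]
  have hux : reflV β (w⁻¹ (reflV γ x)) = x := weyl_apply_eq_self hu fun α hα => hx α (.inl hα)
  have hwx : w⁻¹ (reflV γ x) = x := by
    rw [← reflV_reflV β (w⁻¹ (reflV γ x)), hux,
      reflV_eq_self_of_inner_eq_zero (hx β (.inr rfl))]
  have hmem : ⟪x, coroot γ⟫ • γ ∈ Submodule.span ℝ Φ' := by
    have hsub := weyl_apply_sub_mem_span (inv_mem hw) (reflV γ x)
    rwa [hwx, reflV_apply, sub_sub_cancel] at hsub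
  by_contra hxγ
  exact hγΦ' ((Submodule.smul_mem_iff _ (inner_coroot_eq_zero_iff.not.mpr hxγ)).mp hmem)

theorem statement_13_general (hΦ' : Φ' ⊆ S.Φ) (hβ : β ∈ S.Φ) (hγ : γ ∈ S.Φ)
    (hγΦ' : γ ∉ Submodule.span ℝ Φ') (hlγ : l (coroot γ) ≠ 0) (hw : w ∈ weyl Φ')
    (h : sRefl γ l = wAct w (sRefl β l)) :
    γ ∈ ratSpanRoots S (Φ' ∪ {β}) ∧ γ ∈ ratSpanRoots S (singSet S l ∪ {β}) :=
  ⟨mem_ratSpanRoots_union_of_sRefl_eq hΦ' hβ hγ hlγ hw h,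
    mem_ratSpanRoots_singSet_union_of_sRefl_eq hΦ' hβ hγ hγΦ' hw h⟩

end Jantzen

/-- Lemma 4.14: let `λ ∈ Λ_I⁺` and `β, γ ∈ Ψ_λ⁺` with `sgn(s_β λ, s_γ λ) ≠ 0`.
Then `γ ∈ Φ_{β,1}` and `γ ∈ Φ_{β,2}`. -/
theorem statement_13 {V : Type*} [NormedAddCommGroup V] [InnerProductSpace ℝ V]
    [FiniteDimensional ℝ V]
    (S : RootSys V) (I : Finset V) (hI : I ⊆ S.Δ)
    (lam : HStar V) (hlam : lam ∈ LambdaP (I : Set V))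
    (β γ : V) (hβ : β ∈ PsiP S (PhiI S I) (S.Φ : Set V) lam)
    (hγ : γ ∈ PsiP S (PhiI S I) (S.Φ : Set V) lam)
    (h : sgnW S (PhiI S I) (sRefl β lam) (sRefl γ lam) ≠ 0) :
    γ ∈ ratSpanRoots S (PhiI S I ∪ {β}) ∧ γ ∈ ratSpanRoots S (singSet S lam ∪ {β}) := by
  obtain ⟨w, hw, hwβ⟩ := exists_wAct_eq_of_sgnW_ne_zero h
  exact statement_13_general (fun _ hα => hα.1) hβ.1.1 hγ.1.1
    (mt (RootSys.mem_PhiI_of_mem_span hI hγ.1.1) hγ.2.1) hγ.2.2.ne_zero hw hwβ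

end JantzenGVM
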